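/- arXiv:1604.03345 — 6 statements merged into one kernel-verified Lean document; each statement's English description precedes it below -/
import Mathlib

section
/- Fix a real h > 0. With the explicit functions of θ > 0 defined in the context, the quantity A₂(θ) = hθ/6 − (σ₁²/2)·h·θ³·(−α/3 − β/2 + a)² − (σ₂²/2)·h·θ³·(b − γ/2 − (θ²·α·γ·σ₁²/2)·(−α/3 − β/2 + a))² − (1/2)·h·θ³·c² converges to h/2 as θ → +∞. -/
open Real Filter

/-- `Var(G₁)` as an explicit function of `θ`. -/
noncomputable def V1 (θ : ℝ) : ℝ := (1 - Real.exp (-2 * θ)) / (2 * θ)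

/-- `Var(G₂)` as an explicit function of `θ`. -/
noncomputable def V2 (θ : ℝ) : ℝ :=
  (1 + 1 / θ) ^ 2 * (1 - Real.exp (-2 * θ)) / (2 * θ) + 1 / θ ^ 2
    - (2 / θ ^ 2 + 2 / θ ^ 3) * (1 - Real.exp (-θ))

/-- `Var(G₃)` as an explicit function of `θ`. -/
noncomputable def V3 (θ : ℝ) : ℝ :=
  (1 + 2 / θ + 2 / θ ^ 2) ^ 2 * (1 - Real.exp (-2 * θ)) / (2 * θ)
    + (2 / θ + 2 / θ ^ 2) ^ 3 * θ / 6 - 8 / (6 * θ ^ 5)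
    - (4 / θ ^ 2) * (1 + 2 / θ + 2 / θ ^ 2)

/-- `Cov(G₁,G₂)` as an explicit function of `θ`. -/
noncomputable def C12 (θ : ℝ) : ℝ :=
  (1 / (2 * θ) + 1 / (2 * θ ^ 2)) * (1 - Real.exp (-2 * θ)) + (Real.exp (-θ) - 1) / θ ^ 2

/-- `Cov(G₁,G₃)` as an explicit function of `θ`. -/
noncomputable def C13 (θ : ℝ) : ℝ :=
  (1 / (2 * θ) + 1 / θ ^ 2 + 1 / θ ^ 3) * (1 - Real.exp (-2 * θ)) - 2 / θ ^ 2

/-- `Cov(G₂,G₃)` as an explicit function of `θ`. -/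
noncomputable def C23 (θ : ℝ) : ℝ :=
  (1 + 1 / θ) * (1 / (2 * θ) + 1 / θ ^ 2 + 1 / θ ^ 3) * (1 - Real.exp (-2 * θ))
    - (1 / θ ^ 2 + 2 / θ ^ 3 + 2 / θ ^ 4) * (1 - Real.exp (-θ)) - 1 / θ ^ 2

noncomputable def alphaC (θ : ℝ) : ℝ := Real.sqrt (V1 θ)

noncomputable def betaC (θ : ℝ) : ℝ := C13 θ / alphaC θ

noncomputable def gammaC (θ : ℝ) : ℝ := Real.sqrt (V3 θ - betaC θ ^ 2)

noncomputable def aC (θ : ℝ) : ℝ := C12 θ / alphaC θ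

noncomputable def bC (θ : ℝ) : ℝ := (C23 θ - aC θ * betaC θ) / gammaC θ

noncomputable def c2C (θ : ℝ) : ℝ := V2 θ - aC θ ^ 2 - bC θ ^ 2

noncomputable def sigma1sq (θ : ℝ) : ℝ :=
  (2 * (-(θ ^ 2 / 3 + θ / 2) * alphaC θ ^ 2 + θ ^ 2 * alphaC θ * betaC θ / 2 + 1 / 2))⁻¹

noncomputable def sigma2sq (θ : ℝ) : ℝ :=
  (2 * (-(sigma1sq θ * θ ^ 4 * alphaC θ ^ 2 * gammaC θ ^ 2 / 8) + 1 / 2))⁻¹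


def SDx (f : ℝ → ℝ) : Prop := ∀ k : ℕ, Tendsto (fun x => f x * x ^ k) atTop (nhds 0)

def PGx (f : ℝ → ℝ) : Prop := ∃ k : ℕ, f =O[atTop] (fun x : ℝ => x ^ k)

def Apx (f g : ℝ → ℝ) : Prop := PGx g ∧ SDx (fun x => f x - g x)

lemma PGx.of_tendsto {f : ℝ → ℝ} {L : ℝ} (h : Tendsto f atTop (nhds L)) : PGx f := by
  refine ⟨0, ?_⟩
  simpa using h.isBigO_one ℝ

lemma PGx.mul {f g : ℝ → ℝ} (hf : PGx f) (hg : PGx g) : PGx (fun x => f x * g x) := by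
  obtain ⟨k, hk⟩ := hf
  obtain ⟨l, hl⟩ := hg
  refine ⟨k + l, ?_⟩
  simp only [pow_add]
  exact hk.mul hl

lemma PGx.lift {f : ℝ → ℝ} {k l : ℕ} (hkl : k ≤ l) (hf : f =O[atTop] (fun x : ℝ => x ^ k)) :
    f =O[atTop] (fun x : ℝ => x ^ l) := by
  refine hf.trans (Asymptotics.IsBigO.of_bound 1 ?_)
  filter_upwards [eventually_ge_atTop (1 : ℝ)] with x hx
  have h0 : (0 : ℝ) ≤ x := by linarith
  rw [one_mul, Real.norm_of_nonneg (pow_nonneg h0 _), Real.norm_of_nonneg (pow_nonneg h0 _)]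
  exact pow_le_pow_right₀ hx hkl

lemma PGx.add {f g : ℝ → ℝ} (hf : PGx f) (hg : PGx g) : PGx (fun x => f x + g x) := by
  obtain ⟨k, hk⟩ := hf
  obtain ⟨l, hl⟩ := hg
  exact ⟨max k l, (PGx.lift (le_max_left _ _) hk).add (PGx.lift (le_max_right _ _) hl)⟩

lemma PGx.const (c : ℝ) : PGx (fun _ => c) := PGx.of_tendsto tendsto_const_nhds

lemma SDx.tendsto {f : ℝ → ℝ} (hf : SDx f) : Tendsto f atTop (nhds 0) := by
  simpa using hf 0

lemma SDx.add {f g : ℝ → ℝ} (hf : SDx f) (hg : SDx g) : SDx (fun x => f x + g x) := by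
  intro k
  simpa [add_mul] using (hf k).add (hg k)

lemma SDx.mul {f g : ℝ → ℝ} (hf : SDx f) (hg : PGx g) : SDx (fun x => f x * g x) := by
  obtain ⟨l, hl⟩ := hg
  intro k
  have h1 : (fun x => f x * g x * x ^ k) =O[atTop] (fun x => f x * x ^ (l + k)) := by
    have := ((Asymptotics.isBigO_refl f atTop).mul hl).mul
      (Asymptotics.isBigO_refl (fun x : ℝ => x ^ k) atTop)
    refine this.congr (fun x => rfl) (fun x => ?_)
    ring
  exact h1.trans_tendsto (hf (l + k))

lemma SDx.congr {f g : ℝ → ℝ} (hf : SDx f) (h : f =ᶠ[atTop] g) : SDx g := by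
  intro k
  refine (hf k).congr' ?_
  filter_upwards [h] with x hx
  rw [hx]

lemma Apx.refl {f : ℝ → ℝ} (h : PGx f) : Apx f f := by
  refine ⟨h, fun k => ?_⟩
  simp

lemma Apx.const (c : ℝ) : Apx (fun _ => c) (fun _ => c) := Apx.refl (PGx.const c)

lemma Apx.id : Apx (fun x => x) (fun x => x) :=
  Apx.refl ⟨1, by simpa using Asymptotics.isBigO_refl (fun x : ℝ => x) atTop⟩

lemma Apx.inv : Apx (fun x => x⁻¹) (fun x => x⁻¹) :=
  Apx.refl (PGx.of_tendsto tendsto_inv_atTop_zero)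

lemma Apx.add {f f' g g' : ℝ → ℝ} (hf : Apx f f') (hg : Apx g g') :
    Apx (fun x => f x + g x) (fun x => f' x + g' x) := by
  refine ⟨hf.1.add hg.1, (hf.2.add hg.2).congr (Eventually.of_forall fun x => ?_)⟩
  ring

lemma Apx.mul {f f' g g' : ℝ → ℝ} (hf : Apx f f') (hg : Apx g g') :
    Apx (fun x => f x * g x) (fun x => f' x * g' x) := by
  refine ⟨hf.1.mul hg.1, (((hf.2.mul (PGx.of_tendsto hg.2.tendsto)).add (hf.2.mul hg.1)).add
    (hg.2.mul hf.1)).congr (Eventually.of_forall fun x => ?_)⟩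
  ring

lemma Apx.sub {f f' g g' : ℝ → ℝ} (hf : Apx f f') (hg : Apx g g') :
    Apx (fun x => f x - g x) (fun x => f' x - g' x) := by
  have := hf.add ((Apx.const (-1)).mul hg)
  simpa [sub_eq_add_neg] using this

lemma Apx.neg {f f' : ℝ → ℝ} (hf : Apx f f') :
    Apx (fun x => - f x) (fun x => - f' x) := by
  simpa using (Apx.const (-1)).mul hf

lemma Apx.pow {f f' : ℝ → ℝ} (hf : Apx f f') (n : ℕ) :
    Apx (fun x => f x ^ n) (fun x => f' x ^ n) := by
  induction n with
  | zero => simpa using Apx.const 1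
  | succ n ih => simpa [pow_succ] using ih.mul hf

lemma Apx.divc {f f' : ℝ → ℝ} (hf : Apx f f') (c : ℝ) :
    Apx (fun x => f x / c) (fun x => f' x / c) := by
  simpa [div_eq_mul_inv] using hf.mul (Apx.const c⁻¹)

lemma Apx.congr {f f' g g' : ℝ → ℝ} (hf : Apx f f') (h : ∀ x > 0, f x = g x)
    (h' : ∀ x > 0, f' x = g' x) : Apx g g' := by
  have e : f =ᶠ[atTop] g := by
    filter_upwards [eventually_gt_atTop (0 : ℝ)] with x hx using h x hx
  have e' : f' =ᶠ[atTop] g' := by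
    filter_upwards [eventually_gt_atTop (0 : ℝ)] with x hx using h' x hx
  obtain ⟨⟨k, hk⟩, h2⟩ := hf
  refine ⟨⟨k, hk.congr' e' EventuallyEq.rfl⟩, h2.congr ?_⟩
  filter_upwards [e, e'] with x h1 h2
  rw [h1, h2]

lemma Apx.tendsto {f g : ℝ → ℝ} {P : ℝ → ℝ} {L : ℝ} (h : Apx f g)
    (hP : Continuous P) (hg : ∀ x > 0, g x = P x⁻¹) (hL : P 0 = L) :
    Tendsto f atTop (nhds L) := by
  have h1 : Tendsto g atTop (nhds L) := by
    have := (hP.tendsto 0).comp tendsto_inv_atTop_zero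
    rw [hL] at this
    refine this.congr' ?_
    filter_upwards [eventually_gt_atTop (0 : ℝ)] with x hx
    exact (hg x hx).symm
  have := h1.add h.2.tendsto
  simpa using this

lemma SDx_exp : SDx (fun x => Real.exp (-x)) := by
  intro k
  refine (Real.tendsto_pow_mul_exp_neg_atTop_nhds_zero k).congr (fun x => ?_)
  ring

lemma Apx_p : Apx (fun x => Real.exp (-x)) (fun _ => 0) := by
  refine ⟨PGx.const 0, ?_⟩
  simpa using SDx_exp

lemma Apx_q : Apx (fun x => Real.exp (-2 * x)) (fun _ => 0) := by
  refine (Apx_p.mul Apx_p).congr (fun x _ => ?_) (fun x _ => by simp)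
  rw [← Real.exp_add]
  congr 1
  ring

lemma q_lt {x : ℝ} (hx : 0 < x) : 0 < 1 - Real.exp (-2 * x) := by
  have : Real.exp (-2 * x) < 1 := by
    rw [Real.exp_lt_one_iff]
    linarith
  linarith

lemma Apx_inv : Apx (fun x => (1 - Real.exp (-2 * x))⁻¹) (fun _ => 1) := by
  have h0 : Tendsto (fun x : ℝ => Real.exp (-2 * x)) atTop (nhds 0) := by
    simpa using Apx_q.2.tendsto
  have h1 : Tendsto (fun x : ℝ => (1 - Real.exp (-2 * x))⁻¹) atTop (nhds 1) := by
    have := (h0.const_sub 1).inv₀ (by norm_num)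
    simpa using this
  refine ⟨PGx.const 1, ((Apx_q.2.mul (PGx.of_tendsto h1))).congr ?_⟩
  filter_upwards [eventually_gt_atTop (0 : ℝ)] with x hx
  have h3 := q_lt hx
  generalize Real.exp (-2 * x) = q at *
  have h4 : 1 - q ≠ 0 := h3.ne'
  field_simp
  ring

noncomputable def I1x (x : ℝ) : ℝ := 2 * x * (1 - Real.exp (-2 * x))⁻¹
noncomputable def Gx (x : ℝ) : ℝ := V3 x - C13 x ^ 2 * I1x x
noncomputable def Sx (x : ℝ) : ℝ := -(x ^ 2 / 3 + x / 2) * V1 x + x ^ 2 * C13 x / 2 + 1 / 2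
noncomputable def Mx (x : ℝ) : ℝ := -V1 x / 3 - C13 x / 2 + C12 x
noncomputable def Nx (x : ℝ) : ℝ := C23 x - C12 x * C13 x * I1x x
noncomputable def Wx (x : ℝ) : ℝ := V2 x - C12 x ^ 2 * I1x x
noncomputable def Tx (x : ℝ) : ℝ := 8 * Sx x - x ^ 4 * V1 x * Gx x
noncomputable def Bx (x : ℝ) : ℝ := 4 * Sx x * (Nx x - Gx x / 2) - x ^ 2 * Gx x * Mx x

lemma Apx_I1 : Apx I1x (fun x => 2 * x) :=
  (((Apx.const 2).mul Apx.id).mul Apx_inv).congr (fun x _ => rfl) (fun x _ => by ring)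

lemma Apx_V1 : Apx V1 (fun x => x⁻¹ / 2) := by
  refine ((Apx.inv.divc 2).mul ((Apx.const 1).sub Apx_q)).congr (fun x hx => ?_) (fun x _ => by ring)
  unfold V1; field_simp

lemma Apx_C12 : Apx C12 (fun x => x⁻¹ / 2 - x⁻¹ ^ 2 / 2) := by
  refine ((((Apx.inv.divc 2).add ((Apx.inv.pow 2).divc 2)).mul ((Apx.const 1).sub Apx_q)).add
    ((Apx_p.sub (Apx.const 1)).mul (Apx.inv.pow 2))).congr (fun x hx => ?_) (fun x _ => by ring)
  unfold C12; field_simp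

lemma Apx_C13 : Apx C13 (fun x => x⁻¹ / 2 - x⁻¹ ^ 2 + x⁻¹ ^ 3) := by
  refine ((((Apx.inv.divc 2).add (Apx.inv.pow 2)).add (Apx.inv.pow 3)).mul
    ((Apx.const 1).sub Apx_q) |>.sub
    ((Apx.const 2).mul (Apx.inv.pow 2))).congr (fun x hx => ?_) (fun x _ => by ring)
  unfold C13; field_simp

lemma Apx_C23 : Apx C23 (fun x => x⁻¹ / 2 - x⁻¹ ^ 2 / 2 - x⁻¹ ^ 4) := by
  refine (((((Apx.const 1).add Apx.inv).mul
    (((Apx.inv.divc 2).add (Apx.inv.pow 2)).add (Apx.inv.pow 3))).mul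
    ((Apx.const 1).sub Apx_q) |>.sub
    ((((Apx.inv.pow 2).add ((Apx.const 2).mul (Apx.inv.pow 3))).add
      ((Apx.const 2).mul (Apx.inv.pow 4))).mul ((Apx.const 1).sub Apx_p))).sub
      (Apx.inv.pow 2)).congr (fun x hx => ?_) (fun x _ => by ring)
  unfold C23; field_simp

lemma Apx_V2 : Apx V2 (fun x => x⁻¹ / 2 - 3 / 2 * x⁻¹ ^ 3) := by
  refine ((((((Apx.const 1).add Apx.inv).pow 2).mul
    ((Apx.const 1).sub Apx_q)).mul (Apx.inv.divc 2) |>.add (Apx.inv.pow 2)).sub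
    ((((Apx.const 2).mul (Apx.inv.pow 2)).add ((Apx.const 2).mul (Apx.inv.pow 3))).mul
      ((Apx.const 1).sub Apx_p))).congr (fun x hx => ?_) (fun x _ => by ring)
  unfold V2; field_simp

lemma Apx_V3 : Apx V3 (fun x => x⁻¹ / 2 - 2 / 3 * x⁻¹ ^ 2 + 2 * x⁻¹ ^ 5) := by
  have hA := ((Apx.const 1).add ((Apx.const 2).mul Apx.inv)).add ((Apx.const 2).mul (Apx.inv.pow 2))
  have hB := ((Apx.const 2).mul Apx.inv).add ((Apx.const 2).mul (Apx.inv.pow 2))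
  refine ((((((hA.pow 2).mul ((Apx.const 1).sub Apx_q)).mul (Apx.inv.divc 2)).add
    (((hB.pow 3).mul Apx.id).divc 6)).sub ((Apx.const (8/6)).mul (Apx.inv.pow 5))).sub
    (((Apx.const 4).mul (Apx.inv.pow 2)).mul hA)).congr (fun x hx => ?_) (fun x hx => ?_)
  · unfold V3; field_simp
  · field_simp; ring

lemma Apx_G : Apx Gx (fun x => 4 / 3 * x⁻¹ ^ 2 - 4 * x⁻¹ ^ 3 + 4 * x⁻¹ ^ 4) := by
  refine (Apx_V3.sub ((Apx_C13.pow 2).mul Apx_I1)).congr (fun x hx => rfl) (fun x hx => ?_)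
  field_simp; ring

lemma Apx_S : Apx Sx (fun x => x / 12 - 1 / 4 + x⁻¹ / 2) := by
  refine ((((((Apx.id.pow 2).divc 3).add (Apx.id.divc 2)).neg.mul Apx_V1).add
    (((Apx.id.pow 2).mul Apx_C13).divc 2)).add (Apx.const (1/2))).congr
    (fun x hx => rfl) (fun x hx => ?_)
  field_simp; ring

lemma Apx_M : Apx Mx (fun x => x⁻¹ / 12 - x⁻¹ ^ 3 / 2) := by
  refine (((Apx_V1.neg.divc 3).sub (Apx_C13.divc 2)).add Apx_C12).congr
    (fun x hx => rfl) (fun x hx => ?_)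
  ring

lemma Apx_N : Apx Nx (fun x => x⁻¹ ^ 2 - 2 * x⁻¹ ^ 3) := by
  refine (Apx_C23.sub ((Apx_C12.mul Apx_C13).mul Apx_I1)).congr (fun x hx => rfl) (fun x hx => ?_)
  field_simp; ring

lemma Apx_W : Apx Wx (fun x => x⁻¹ ^ 2 - 2 * x⁻¹ ^ 3) := by
  refine (Apx_V2.sub ((Apx_C12.pow 2).mul Apx_I1)).congr (fun x hx => rfl) (fun x hx => ?_)
  field_simp; ring

lemma Apx_T : Apx Tx (fun x => 2 * x⁻¹) := by
  refine (((Apx.const 8).mul Apx_S).sub (((Apx.id.pow 4).mul Apx_V1).mul Apx_G)).congr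
    (fun x hx => rfl) (fun x hx => ?_)
  field_simp; ring

lemma Apx_B : Apx Bx (fun x => x⁻¹ ^ 3 / 3 - 2 * x⁻¹ ^ 5) := by
  refine ((((Apx.const 4).mul Apx_S).mul (Apx_N.sub (Apx_G.divc 2))).sub
    (((Apx.id.pow 2).mul Apx_G).mul Apx_M)).congr
    (fun x hx => rfl) (fun x hx => ?_)
  field_simp; ring

lemma lim_m : Tendsto (fun x => x * (x * Mx x - 1 / 12)) atTop (nhds 0) :=
  (Apx.id.mul ((Apx.id.mul Apx_M).sub (Apx.const (1/12)))).tendsto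
    (P := fun t => - t / 2) (by fun_prop) (fun x hx => by field_simp; ring) (by norm_num)

lemma lim_s : Tendsto (fun x => x * (x⁻¹ * Sx x - 1 / 12)) atTop (nhds (-1/4)) :=
  (Apx.id.mul ((Apx.inv.mul Apx_S).sub (Apx.const (1/12)))).tendsto
    (P := fun t => - 1 / 4 + t / 2) (by fun_prop) (fun x hx => by field_simp; ring) (by norm_num)

lemma lim_v : Tendsto (fun x => x * (x * V1 x - 1 / 2)) atTop (nhds 0) :=
  (Apx.id.mul ((Apx.id.mul Apx_V1).sub (Apx.const (1/2)))).tendsto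
    (P := fun _ => 0) (by fun_prop) (fun x hx => by field_simp; ring) (by norm_num)

lemma lim_w : Tendsto (fun x => x * (x ^ 2 * Wx x - 1)) atTop (nhds (-2)) :=
  (Apx.id.mul (((Apx.id.pow 2).mul Apx_W).sub (Apx.const 1))).tendsto
    (P := fun _ => -2) (by fun_prop) (fun x hx => by field_simp; ring) (by norm_num)

lemma lim_n : Tendsto (fun x => x * (x ^ 2 * Nx x - 1)) atTop (nhds (-2)) :=
  (Apx.id.mul (((Apx.id.pow 2).mul Apx_N).sub (Apx.const 1))).tendsto
    (P := fun _ => -2) (by fun_prop) (fun x hx => by field_simp; ring) (by norm_num)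

lemma lim_g : Tendsto (fun x => x * (x ^ 2 * Gx x - 4 / 3)) atTop (nhds (-4)) :=
  (Apx.id.mul (((Apx.id.pow 2).mul Apx_G).sub (Apx.const (4 / 3)))).tendsto
    (P := fun t => -4 + 4 * t) (by fun_prop) (fun x hx => by field_simp; ring) (by norm_num)

lemma lim_T : Tendsto (fun x => x * Tx x) atTop (nhds 2) :=
  (Apx.id.mul Apx_T).tendsto
    (P := fun _ => 2) (by fun_prop) (fun x hx => by field_simp) (by norm_num)

lemma lim_B : Tendsto (fun x => x ^ 3 * Bx x) atTop (nhds (1 / 3)) :=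
  ((Apx.id.pow 3).mul Apx_B).tendsto
    (P := fun t => 1 / 3 - 2 * t ^ 2) (by fun_prop) (fun x hx => by field_simp) (by norm_num)

lemma limA : Tendsto (fun x => x / 6 - x ^ 3 * Mx x ^ 2 / (4 * Sx x * V1 x)
    - x ^ 3 * Bx x ^ 2 / (4 * Sx x * Tx x * Gx x)
    - x ^ 3 / 2 * (Wx x - Nx x ^ 2 / Gx x)) atTop (nhds (1 / 2)) := by
  have ht : Tendsto (fun x : ℝ => x⁻¹) atTop (nhds 0) := tendsto_inv_atTop_zero
  have key : ∀ {f : ℝ → ℝ} {c L : ℝ}, Tendsto (fun x => x * (f x - c)) atTop (nhds L) →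
      Tendsto f atTop (nhds c) := by
    intro f c L hf
    have h1 := (ht.mul hf).add_const c
    simp only [zero_mul, zero_add] at h1
    refine h1.congr' ?_
    filter_upwards [eventually_gt_atTop (0 : ℝ)] with x hx
    field_simp
    ring
  have kS := key lim_s
  have kV := key lim_v
  have kG := key lim_g
  have kM := key lim_m
  have kN := key lim_n
  -- term 2 minus x/24
  have h2 := ((lim_m.mul (kM.add_const (1/12))).sub
    (((lim_s.mul kV).add (lim_v.const_mul (1/12))).div_const 6)).div
      ((kS.mul kV).const_mul 4) (by norm_num)
  have h3 := ht.mul ((lim_B.pow 2).div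
    (((kS.const_mul 4).mul lim_T).mul kG) (by norm_num))
  have h4 := (lim_w.div_const 2).add (((lim_g.const_mul (3/4)).sub
    (lim_n.mul (kN.add_const 1))).div (kG.const_mul 2) (by norm_num))
  have h5 := (h2.neg.sub h3).sub h4
  norm_num at h5
  have eS := kS.eventually_ne (show (1/12 : ℝ) ≠ 0 by norm_num)
  have eV := kV.eventually_ne (show (1/2 : ℝ) ≠ 0 by norm_num)
  have eG := kG.eventually_ne (show (4/3 : ℝ) ≠ 0 by norm_num)
  have eT := lim_T.eventually_ne (show (2 : ℝ) ≠ 0 by norm_num)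
  refine h5.congr' ?_
  filter_upwards [eventually_gt_atTop (0 : ℝ), eS, eV, eG, eT] with x hx h1 h2 h3 h4
  have a1 : Sx x ≠ 0 := right_ne_zero_of_mul h1
  have a2 : V1 x ≠ 0 := right_ne_zero_of_mul h2
  have a3 : Gx x ≠ 0 := right_ne_zero_of_mul h3
  have a4 : Tx x ≠ 0 := right_ne_zero_of_mul h4
  have hx' : x ≠ 0 := hx.ne'
  generalize Sx x = S at *
  generalize V1 x = V at *
  generalize Gx x = G at *
  generalize Tx x = T at *
  generalize Mx x = M at *
  generalize Nx x = N at *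
  generalize Wx x = W at *
  generalize Bx x = B at *
  field_simp
  ring

lemma alg (x al be ga a b c s m T h : ℝ) (hal : al ≠ 0) (hga : ga ≠ 0) (hs : s ≠ 0)
    (hT : T ≠ 0) (hTe : T = 8 * s - x ^ 4 * al ^ 2 * ga ^ 2)
    (hm : m = -al / 3 - be / 2 + a) :
    h * x / 6 - (2 * s)⁻¹ / 2 * h * x ^ 3 * m ^ 2
      - (2 * (-((2 * s)⁻¹ * x ^ 4 * al ^ 2 * ga ^ 2 / 8) + 1 / 2))⁻¹ / 2 * h * x ^ 3 *
        (b - ga / 2 - (x ^ 2 * al * ga * (2 * s)⁻¹ / 2) * m) ^ 2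
      - 1 / 2 * h * x ^ 3 * c
    = h * (x / 6 - x ^ 3 * (al * m) ^ 2 / (4 * s * al ^ 2)
      - x ^ 3 * (4 * s * (ga * b - ga ^ 2 / 2) - x ^ 2 * ga ^ 2 * (al * m)) ^ 2
        / (4 * s * T * ga ^ 2)
      - x ^ 3 / 2 * (c + b ^ 2 - (ga * b) ^ 2 / ga ^ 2)) := by
  have e : (2 * (-((2 * s)⁻¹ * x ^ 4 * al ^ 2 * ga ^ 2 / 8) + 1 / 2))⁻¹ = 8 * s / T := by
    rw [← inv_div]
    congr 1
    rw [hTe]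
    field_simp
    ring
  rw [e]
  clear e hTe hm
  field_simp
  ring

theorem A2_tendsto (h : ℝ) (hh : 0 < h)
    (hwd : ∀ᶠ θ : ℝ in atTop,
      0 < V3 θ - betaC θ ^ 2 ∧
      0 < -(θ ^ 2 / 3 + θ / 2) * alphaC θ ^ 2 + θ ^ 2 * alphaC θ * betaC θ / 2 + 1 / 2 ∧
      0 < -(sigma1sq θ * θ ^ 4 * alphaC θ ^ 2 * gammaC θ ^ 2 / 8) + 1 / 2) :
    Tendsto (fun θ : ℝ =>
        h * θ / 6
          - sigma1sq θ / 2 * h * θ ^ 3 * (-(alphaC θ) / 3 - betaC θ / 2 + aC θ) ^ 2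
          - sigma2sq θ / 2 * h * θ ^ 3 *
              (bC θ - gammaC θ / 2 -
                (θ ^ 2 * alphaC θ * gammaC θ * sigma1sq θ / 2) *
                  (-(alphaC θ) / 3 - betaC θ / 2 + aC θ)) ^ 2
          - 1 / 2 * h * θ ^ 3 * c2C θ)
      atTop (nhds (h / 2)) := by
  have hl := limA.const_mul h
  rw [show h * (1 / 2) = h / 2 by ring] at hl
  refine hl.congr' ?_
  filter_upwards [eventually_gt_atTop (0 : ℝ), hwd] with x hx hw
  obtain ⟨hw1, hw2, hw3⟩ := hw
  have hV : 0 < V1 x := div_pos (q_lt hx) (by linarith)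
  have hal : 0 < alphaC x := Real.sqrt_pos.2 hV
  have hal2 : V1 x = alphaC x ^ 2 := (Real.sq_sqrt hV.le).symm
  have hga : 0 < gammaC x := Real.sqrt_pos.2 hw1
  have hga2 : gammaC x ^ 2 = V3 x - betaC x ^ 2 := Real.sq_sqrt hw1.le
  have hb : C13 x = alphaC x * betaC x := by unfold betaC; field_simp
  have ha : C12 x = alphaC x * aC x := by unfold aC; field_simp
  have hbb : C23 x = gammaC x * bC x + aC x * betaC x := by unfold bC; field_simp; ring
  have hV2 : V2 x = c2C x + aC x ^ 2 + bC x ^ 2 := by unfold c2C; ring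
  have hI : I1x x = (alphaC x ^ 2)⁻¹ := by
    rw [← hal2]; unfold I1x V1; rw [inv_div, div_eq_mul_inv]
  have hG : Gx x = gammaC x ^ 2 := by
    unfold Gx; rw [hga2, hI, hb]; field_simp
  have hN : Nx x = gammaC x * bC x := by
    unfold Nx; rw [hbb, hI, hb, ha]; field_simp; ring
  have hW : Wx x = c2C x + bC x ^ 2 := by
    unfold Wx; rw [hV2, hI, ha]; field_simp; ring
  have hM : Mx x = alphaC x * (-(alphaC x) / 3 - betaC x / 2 + aC x) := by
    unfold Mx; rw [hal2, hb, ha]; ring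
  have hS : Sx x = -(x ^ 2 / 3 + x / 2) * alphaC x ^ 2 + x ^ 2 * alphaC x * betaC x / 2 + 1 / 2 := by
    unfold Sx; rw [hal2, hb]; ring
  have hs1 : sigma1sq x = (2 * Sx x)⁻¹ := by rw [hS]; rfl
  have hSpos : 0 < Sx x := by rw [hS]; exact hw2
  have hT : Tx x = 8 * Sx x - x ^ 4 * alphaC x ^ 2 * gammaC x ^ 2 := by
    unfold Tx; rw [hal2, hG]
  have hTpos : Tx x ≠ 0 := by
    rw [hs1] at hw3
    have e : Tx x = 16 * Sx x *
        (-((2 * Sx x)⁻¹ * x ^ 4 * alphaC x ^ 2 * gammaC x ^ 2 / 8) + 1 / 2) := by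
      rw [hT]; field_simp; ring
    rw [e]
    positivity
  have hB : Bx x = 4 * Sx x * (gammaC x * bC x - gammaC x ^ 2 / 2) - x ^ 2 * gammaC x ^ 2 *
      (alphaC x * (-(alphaC x) / 3 - betaC x / 2 + aC x)) := by
    unfold Bx; rw [hN, hG, hM]
  have hs2 : sigma2sq x = (2 * (-((2 * Sx x)⁻¹ * x ^ 4 * alphaC x ^ 2 * gammaC x ^ 2 / 8)
      + 1 / 2))⁻¹ := by
    unfold sigma2sq; rw [hs1]
  rw [hB, hM, hN, hW, hG, hal2, hs2, hs1]
  exact (alg x (alphaC x) (betaC x) (gammaC x) (aC x) (bC x) (c2C x) (Sx x) _ (Tx x) h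
    hal.ne' hga.ne' hSpos.ne' hTpos hT rfl).symm
end

section
/- Fix a real h > 0. With the explicit functions of θ > 0 defined in the context, the quantity B₂(θ) = hθ/6 − (σ₁²/2)·h·θ³·(−α/6 + β/2)² − (σ₂²/2)·h·θ³·(γ/2 − (θ²·α·γ·σ₁²/2)·(−α/6 + β/2))² converges to h/2 as θ → +∞. -/
open Real Filter

lemma B2_aux (h θ E α β γ s1 s2 D1 : ℝ) (ht : 0 < θ) (hE : 0 < E) (ha : 0 < α)
    (hA : α ^ 2 = E / (2 * θ))
    (hP : α * β = (1 / (2 * θ) + 1 / θ ^ 2 + 1 / θ ^ 3) * E - 2 / θ ^ 2)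
    (hG : γ ^ 2 = (1 + 2 / θ + 2 / θ ^ 2) ^ 2 * E / (2 * θ)
    + (2 / θ + 2 / θ ^ 2) ^ 3 * θ / 6 - 8 / (6 * θ ^ 5)
    - (4 / θ ^ 2) * (1 + 2 / θ + 2 / θ ^ 2) - β ^ 2)
    (hD : D1 = -(θ ^ 2 / 3 + θ / 2) * α ^ 2 + θ ^ 2 * α * β / 2 + 1 / 2)
    (hD0 : 0 < D1) (hs1 : s1 = (2 * D1)⁻¹)
    (hs2 : s2 = (2 * (-(s1 * θ ^ 4 * α ^ 2 * γ ^ 2 / 8) + 1 / 2))⁻¹) :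
    h * θ / 6 - s1 / 2 * h * θ ^ 3 * (-α / 6 + β / 2) ^ 2
      - s2 / 2 * h * θ ^ 3 * (γ / 2 - (θ ^ 2 * α * γ * s1 / 2) * (-α / 6 + β / 2)) ^ 2
      = h * (E⁻¹ - 1 / 2 - 1 / 2 * θ⁻¹) := by
  have ht0 : θ ≠ 0 := ht.ne'
  have hE0 : E ≠ 0 := hE.ne'
  obtain ⟨U, hU⟩ : ∃ U, U = 12 * θ * D1 := ⟨_, rfl⟩
  have hU0 : U ≠ 0 := by rw [hU]; positivity
  have hU' : U = E * (θ ^ 2 + 3 * θ + 6) - 6 * θ := by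
    have : θ ^ 2 * α * β = θ ^ 2 * (α * β) := by ring
    rw [hU, hD, this, hA, hP]; field_simp; ring
  have hs1' : s1 = 6 * θ / U := by
    rw [hs1, hU]; have := hD0.ne'; field_simp; norm_num
  have hb2 : β ^ 2 = (α * β) ^ 2 / α ^ 2 := by
    have := ha.ne'; field_simp
  have hG' : γ ^ 2 = 4 / (3 * θ ^ 4 * E) * (U - 3 * E) := by
    rw [hG, hb2, hA, hP, hU']; field_simp; ring
  have hs2' : s2 = U / (3 * E) := by
    have : 2 * (-(s1 * θ ^ 4 * α ^ 2 * γ ^ 2 / 8) + 1 / 2) = 3 * E / U := by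
      rw [hs1', hA, hG']; field_simp; ring
    rw [hs2, this, inv_div]
  have hQ : α * (-α / 6 + β / 2) = (U - 3 * E) / (6 * θ ^ 3) := by
    have : α * (-α / 6 + β / 2) = - α ^ 2 / 6 + α * β / 2 := by ring
    rw [this, hA, hP, hU']; field_simp; ring
  have hQ2 : (-α / 6 + β / 2) ^ 2 = ((U - 3 * E) / (6 * θ ^ 3)) ^ 2 / (E / (2 * θ)) := by
    rw [← hQ, ← hA]; have := ha.ne'; field_simp
  have hR : (γ / 2 - (θ ^ 2 * α * γ * s1 / 2) * (-α / 6 + β / 2)) ^ 2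
      = γ ^ 2 / 4 * (1 - θ ^ 2 * s1 * (α * (-α / 6 + β / 2))) ^ 2 := by ring
  have hE' : h * θ / 6 = h * (U + 6 * θ - 3 * θ * E - 6 * E) / (6 * θ * E) := by
    rw [hU']; field_simp; ring
  rw [hR, hQ, hQ2, hG', hs2', hs1', hE']
  field_simp
  ring

theorem B2_tendsto (h : ℝ) (hh : 0 < h)
    (hwd : ∀ᶠ θ : ℝ in atTop,
      0 < V3 θ - betaC θ ^ 2 ∧
      0 < -(θ ^ 2 / 3 + θ / 2) * alphaC θ ^ 2 + θ ^ 2 * alphaC θ * betaC θ / 2 + 1 / 2 ∧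
      0 < -(sigma1sq θ * θ ^ 4 * alphaC θ ^ 2 * gammaC θ ^ 2 / 8) + 1 / 2) :
    Tendsto (fun θ : ℝ =>
        h * θ / 6
          - sigma1sq θ / 2 * h * θ ^ 3 * (-(alphaC θ) / 6 + betaC θ / 2) ^ 2
          - sigma2sq θ / 2 * h * θ ^ 3 *
              (gammaC θ / 2 -
                (θ ^ 2 * alphaC θ * gammaC θ * sigma1sq θ / 2) *
                  (-(alphaC θ) / 6 + betaC θ / 2)) ^ 2)
      atTop (nhds (h / 2)) := by
  have hlim : Tendsto (fun θ : ℝ => h * ((1 - Real.exp (-2 * θ))⁻¹ - 1 / 2 - 1 / 2 * θ⁻¹))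
      atTop (nhds (h / 2)) := by
    have h1 : Tendsto (fun θ : ℝ => Real.exp (-2 * θ)) atTop (nhds 0) :=
      Real.tendsto_exp_atBot.comp (tendsto_id.const_mul_atTop_of_neg (by norm_num))
    have h2 := (((h1.const_sub 1).inv₀ (by norm_num)).sub_const (1 / 2)).sub
      (tendsto_inv_atTop_zero.const_mul (1 / 2 : ℝ))
    have h3 := h2.const_mul h
    convert h3 using 2
    norm_num
    ring
  refine hlim.congr' ?_
  filter_upwards [hwd, eventually_gt_atTop 0] with θ hw ht
  obtain ⟨hw1, hw2, -⟩ := hw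
  have hE : 0 < 1 - Real.exp (-2 * θ) := by
    have : Real.exp (-2 * θ) < 1 := Real.exp_lt_one_iff.mpr (by linarith)
    linarith
  have hV : 0 < V1 θ := by unfold V1; positivity
  have ha : 0 < alphaC θ := Real.sqrt_pos.mpr hV
  refine (B2_aux h θ (1 - Real.exp (-2 * θ)) (alphaC θ) (betaC θ) (gammaC θ) (sigma1sq θ)
    (sigma2sq θ) _ ht hE ha ?_ ?_ ?_ rfl hw2 rfl rfl).symm
  · exact Real.sq_sqrt hV.le
  · exact mul_div_cancel₀ _ ha.ne'
  · exact Real.sq_sqrt hw1.le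
end

section
/- With the explicit functions of θ > 0 defined in the context, σ₁²(θ) admits the asymptotic expansion σ₁²(θ) = 6/θ + 18/θ² + 18/θ³ − 54/θ⁴ + o(1/θ⁴) as θ → +∞; equivalently, θ⁴·(σ₁²(θ) − 6/θ − 18/θ² − 18/θ³) → −54 as θ → +∞. -/
open Real Filter

theorem sigma1sq_asymptotic
    (hwd : ∀ᶠ θ : ℝ in atTop,
      0 < -(θ ^ 2 / 3 + θ / 2) * alphaC θ ^ 2 + θ ^ 2 * alphaC θ * betaC θ / 2 + 1 / 2) :
    Tendsto (fun θ : ℝ => θ ^ 4 * (sigma1sq θ - 6 / θ - 18 / θ ^ 2 - 18 / θ ^ 3))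
      atTop (nhds (-54)) := by
  have hx : Tendsto (fun θ : ℝ => θ⁻¹) atTop (nhds 0) := tendsto_inv_atTop_zero
  have h2 : Tendsto (fun θ : ℝ => 2 * θ) atTop atTop :=
    tendsto_id.const_mul_atTop (by norm_num)
  have he : Tendsto (fun θ : ℝ => Real.exp (-2 * θ)) atTop (nhds 0) := by
    have := Real.tendsto_exp_neg_atTop_nhds_zero.comp h2
    refine this.congr fun θ => ?_
    simp [Function.comp]
  have he3 : Tendsto (fun θ : ℝ => Real.exp (-2 * θ) * θ ^ 3) atTop (nhds 0) := by
    have := ((Real.tendsto_pow_mul_exp_neg_atTop_nhds_zero 3).comp h2).const_mul (1 / 8)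
    rw [mul_zero] at this
    refine this.congr fun θ => ?_
    simp only [Function.comp, neg_mul]
    ring
  have hden : Tendsto (fun θ : ℝ => 1 - 3 * θ⁻¹ + 6 * θ⁻¹ ^ 2
      - Real.exp (-2 * θ) * (1 + 3 * θ⁻¹ + 6 * θ⁻¹ ^ 2)) atTop (nhds 1) := by
    have := (((hx.const_mul 3).const_sub 1).add ((hx.pow 2).const_mul 6)).sub
      (he.mul (((hx.const_mul 3).const_add 1).add ((hx.pow 2).const_mul 6)))
    norm_num at this ⊢
    exact this
  have hnum : Tendsto (fun θ : ℝ => -54 - 108 * θ⁻¹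
      + 6 * (Real.exp (-2 * θ) * θ ^ 3) * ((1 + 3 * θ⁻¹ + 3 * θ⁻¹ ^ 2) *
        (1 + 3 * θ⁻¹ + 6 * θ⁻¹ ^ 2))) atTop (nhds (-54)) := by
    have := ((hx.const_mul 108).const_sub (-54)).add ((he3.const_mul 6).mul
      ((((hx.const_mul 3).const_add 1).add ((hx.pow 2).const_mul 3)).mul
      (((hx.const_mul 3).const_add 1).add ((hx.pow 2).const_mul 6))))
    norm_num at this ⊢
    exact this
  have hlim := hnum.div hden one_ne_zero
  rw [div_one] at hlim
  refine hlim.congr' ?_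
  filter_upwards [eventually_gt_atTop 0, hden.eventually (lt_mem_nhds zero_lt_one)] with θ hθ hD
  have hV : 0 < V1 θ := by
    unfold V1
    have : Real.exp (-2 * θ) < 1 := Real.exp_lt_one_iff.2 (by linarith)
    apply div_pos <;> linarith
  have ha : alphaC θ ^ 2 = V1 θ := Real.sq_sqrt hV.le
  have hab : θ ^ 2 * alphaC θ * betaC θ = θ ^ 2 * C13 θ := by
    have : alphaC θ ≠ 0 := (Real.sqrt_pos.2 hV).ne'
    unfold betaC
    field_simp
  have hs : sigma1sq θ = 6 * θ⁻¹ / (1 - 3 * θ⁻¹ + 6 * θ⁻¹ ^ 2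
      - Real.exp (-2 * θ) * (1 + 3 * θ⁻¹ + 6 * θ⁻¹ ^ 2)) := by
    unfold sigma1sq
    rw [ha, hab, V1, C13]
    rw [inv_eq_iff_eq_inv, inv_div]
    generalize Real.exp (-2 * θ) = e
    field_simp
    ring
  rw [hs]
  simp only [Pi.div_apply]
  rw [div_eq_iff hD.ne']
  have key : ∀ D : ℝ, D ≠ 0 → θ ^ 4 * (6 * θ⁻¹ / D - 6 / θ - 18 / θ ^ 2 - 18 / θ ^ 3) * D
      = θ ^ 4 * (6 * θ⁻¹ - (6 / θ + 18 / θ ^ 2 + 18 / θ ^ 3) * D) := by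
    intro D hD
    field_simp
    ring
  rw [key _ hD.ne']
  generalize Real.exp (-2 * θ) = e
  field_simp
  ring
end

section
/- Let B₂ > 0, p₂₁ ≥ 0, D ≥ 0, Δ ≥ 0 be reals, and let t₂′, x, z be reals with |x − z| ≤ D and |2B₂(p₂₁ + 1)z − t₂′| ≤ Δ. Then exp(−(1/(4B₂))·(t₂′ − 2B₂(p₂₁ + 1)z)² − B₂·p₂₁²·D² − p₂₁·D·Δ) ≤ exp(−(1/(4B₂))·(t₂′ − 2B₂(p₂₁·x + z))²) ≤ exp(−(1/(4B₂))·(t₂′ − 2B₂(p₂₁ + 1)z)² + p₂₁·D·Δ). -/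
theorem gaussian_weight_separation
    (B₂ p₂₁ D Δ : ℝ) (hB₂ : 0 < B₂) (hp : 0 ≤ p₂₁) (hD : 0 ≤ D) (hΔ : 0 ≤ Δ)
    (t₂' x z : ℝ) (hxz : |x - z| ≤ D) (ht : |2 * B₂ * (p₂₁ + 1) * z - t₂'| ≤ Δ) :
    Real.exp (-(1 / (4 * B₂)) * (t₂' - 2 * B₂ * (p₂₁ + 1) * z) ^ 2
        - B₂ * p₂₁ ^ 2 * D ^ 2 - p₂₁ * D * Δ)
      ≤ Real.exp (-(1 / (4 * B₂)) * (t₂' - 2 * B₂ * (p₂₁ * x + z)) ^ 2) ∧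
    Real.exp (-(1 / (4 * B₂)) * (t₂' - 2 * B₂ * (p₂₁ * x + z)) ^ 2)
      ≤ Real.exp (-(1 / (4 * B₂)) * (t₂' - 2 * B₂ * (p₂₁ + 1) * z) ^ 2 + p₂₁ * D * Δ) := by
  have key : -(1 / (4 * B₂)) * (t₂' - 2 * B₂ * (p₂₁ * x + z)) ^ 2
      = -(1 / (4 * B₂)) * (t₂' - 2 * B₂ * (p₂₁ + 1) * z) ^ 2
        - p₂₁ * ((x - z) * (2 * B₂ * (p₂₁ + 1) * z - t₂')) - B₂ * p₂₁ ^ 2 * (x - z) ^ 2 := by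
    field_simp
    ring
  have h1 : |(x - z) * (2 * B₂ * (p₂₁ + 1) * z - t₂')| ≤ D * Δ := by
    rw [abs_mul]
    exact mul_le_mul hxz ht (abs_nonneg _) hD
  obtain ⟨h2, h3⟩ := abs_le.mp h1
  have h4 := mul_le_mul_of_nonneg_left h2 hp
  have h5 := mul_le_mul_of_nonneg_left h3 hp
  have h6 : (x - z) ^ 2 ≤ D ^ 2 := sq_le_sq' (abs_le.mp hxz).1 (abs_le.mp hxz).2
  have h7 : 0 ≤ B₂ * p₂₁ ^ 2 := by positivity
  have h8 := mul_le_mul_of_nonneg_left h6 h7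
  have h9 := mul_nonneg h7 (sq_nonneg (x - z))
  rw [key]
  constructor <;> apply Real.exp_le_exp.mpr <;> linarith
end

section
/- Let E₀, E₁, …, E_n be measurable spaces. For 1 ≤ k ≤ n let 𝔔_k be a Markov kernel from E_{k−1} to E_k, let Ψ_k : E_k → [0,∞) be bounded measurable, and set 𝔕_k(x, dx′) = Ψ_k(x′)·𝔔_k(x, dx′). Assume each 𝔕_k is ε_k-mixing: there exist a nonzero finite measure λ_k on E_k and constants ε′_k, ε″_k > 0 with ε′_k·ε″_k = ε_k² and ε_k ∈ (0,1), such that ε′_k·λ_k(A) ≤ 𝔕_k(x, A) ≤ (1/ε″_k)·λ_k(A) for all x ∈ E_{k−1} and all measurable A ⊆ E_k. Let Ψ_{n|0}(x) = (𝔕_1𝔕_2⋯𝔕_n)(x, E_n) (the total mass at x of the composed kernel). Then for any probability measures η₀, η₀′ on E₀, the probability measures η_n = normalization of (𝔕_1⋯𝔕_n applied to η₀) and η_n′ = normalization of (𝔕_1⋯𝔕_n applied to η₀′) satisfy ‖η_n − η_n′‖ ≤ (∏_{k=1}^n (1 − ε_k²)) · ‖Ψ_{n|0}•η₀ − Ψ_{n|0}•η₀′‖.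 -/
open MeasureTheory ProbabilityTheory

/-- Total variation distance `sup_A |μ(A) − ν(A)|` between two measures. -/
noncomputable def tvDist {E : Type*} [MeasurableSpace E] (μ ν : Measure E) : ℝ :=
  ⨆ s : { s : Set E // MeasurableSet s }, |(μ s).toReal - (ν s).toReal|

/-- Normalization `m / m(E)` of a measure (the zero measure if `m` is zero). -/
noncomputable def normalizeMeasure {E : Type*} [MeasurableSpace E] (m : Measure E) : Measure E :=
  (m Set.univ)⁻¹ • m

/-- The probability measure `Ψ•μ (dv) = Ψ(v) μ(dv) / ∫ Ψ dμ`. -/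
noncomputable def bullet {E : Type*} [MeasurableSpace E] (Ψ : E → ℝ) (μ : Measure E) :
    Measure E :=
  (ENNReal.ofReal (∫ v, Ψ v ∂μ))⁻¹ • μ.withDensity fun v => ENNReal.ofReal (Ψ v)

/-- The composed kernel `𝔖₀𝔖₁⋯𝔖_{n−1}` from `E 0` to `E n`. -/
noncomputable def compChain {E : ℕ → Type*} [∀ k, MeasurableSpace (E k)]
    (S : ∀ k, Kernel (E k) (E (k + 1))) : (n : ℕ) → Kernel (E 0) (E n)
  | 0 => Kernel.id
  | n + 1 => (S n).comp (compChain S n)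

open scoped ENNReal

lemma fk_bdd {E : Type*} [MeasurableSpace E] (μ ν : Measure E)
    [IsProbabilityMeasure μ] [IsProbabilityMeasure ν] (s : Set E) :
    |(μ s).toReal - (ν s).toReal| ≤ 1 := by
  have h1 : (μ s).toReal ≤ 1 := measureReal_le_one
  have h2 : (ν s).toReal ≤ 1 := measureReal_le_one
  have h3 : 0 ≤ (μ s).toReal := ENNReal.toReal_nonneg
  have h4 : 0 ≤ (ν s).toReal := ENNReal.toReal_nonneg
  rw [abs_le]; constructor <;> linarith

lemma fk_le_tv {E : Type*} [MeasurableSpace E] (μ ν : Measure E)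
    [IsProbabilityMeasure μ] [IsProbabilityMeasure ν] {s : Set E} (hs : MeasurableSet s) :
    |(μ s).toReal - (ν s).toReal| ≤ tvDist μ ν := by
  unfold tvDist
  exact le_ciSup (f := fun s : { s : Set E // MeasurableSet s } =>
    |(μ s).toReal - (ν s).toReal|)
    ⟨1, by rintro _ ⟨t, rfl⟩; exact fk_bdd μ ν t⟩ ⟨s, hs⟩

lemma fk_tv_comm {E : Type*} [MeasurableSpace E] (μ ν : Measure E) :
    tvDist μ ν = tvDist ν μ := by
  unfold tvDist
  simp_rw [abs_sub_comm]

lemma fk_int_le {E : Type*} [MeasurableSpace E] (μ ν : Measure E)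
    [IsProbabilityMeasure μ] [IsProbabilityMeasure ν] (f : E → ℝ) (hf : Measurable f)
    (M : ℝ) (h0 : ∀ x, 0 ≤ f x) (hM : ∀ x, f x ≤ M) :
    ∫ x, f x ∂μ - ∫ x, f x ∂ν ≤ M * tvDist μ ν := by
  have hint : ∀ (m : Measure E) [IsFiniteMeasure m], Integrable f m := fun m _ =>
    Integrable.of_bound hf.aestronglyMeasurable M
      (ae_of_all _ fun x => by rw [Real.norm_eq_abs, abs_of_nonneg (h0 x)]; exact hM x)
  obtain ⟨s, hs, hs1, hs2⟩ := hahn_decomposition μ ν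
  have r1 : ν.restrict s ≤ μ.restrict s := by
    rw [Measure.le_iff]
    intro t ht
    rw [Measure.restrict_apply ht, Measure.restrict_apply ht]
    exact hs1 _ (ht.inter hs) Set.inter_subset_right
  have r2 : μ.restrict sᶜ ≤ ν.restrict sᶜ := by
    rw [Measure.le_iff]
    intro t ht
    rw [Measure.restrict_apply ht, Measure.restrict_apply ht]
    exact hs2 _ (ht.inter hs.compl) Set.inter_subset_right
  have i1 : ∫ x in s, (M - f x) ∂ν ≤ ∫ x in s, (M - f x) ∂μ :=
    integral_mono_measure r1 (ae_of_all _ fun x => sub_nonneg.2 (hM x))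
      ((integrable_const M).sub (hint _))
  have i2 : ∫ x in sᶜ, f x ∂μ ≤ ∫ x in sᶜ, f x ∂ν :=
    integral_mono_measure r2 (ae_of_all _ fun x => h0 x) (hint _)
  rw [integral_sub (integrable_const M) (hint _), integral_sub (integrable_const M) (hint _)] at i1
  simp only [integral_const, smul_eq_mul, measureReal_restrict_apply_univ] at i1
  have e1 := integral_add_compl hs (hint μ)
  have e2 := integral_add_compl hs (hint ν)
  obtain ⟨x⟩ : Nonempty E := nonempty_of_isProbabilityMeasure μ
  have hM0 : 0 ≤ M := (h0 x).trans (hM x)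
  have := mul_le_mul_of_nonneg_left ((le_abs_self _).trans (fk_le_tv μ ν hs)) hM0
  simp only [measureReal_def] at i1
  nlinarith

lemma fk_norm_prob {E : Type*} [MeasurableSpace E] (m : Measure E) (h0 : m Set.univ ≠ 0)
    (h1 : m Set.univ ≠ ∞) : IsProbabilityMeasure (normalizeMeasure m) := by
  constructor
  simp [normalizeMeasure, ENNReal.inv_mul_cancel h0 h1]

lemma fk_wd {E : Type*} [MeasurableSpace E] (m : Measure E) [IsFiniteMeasure m] (hm : m ≠ 0)
    (F : E → ℝ≥0∞) (c C : ℝ≥0∞) (hc : c ≠ 0) (hC : C ≠ ∞)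
    (h1 : ∀ x, c ≤ F x) (h2 : ∀ x, F x ≤ C) :
    ∫⁻ x, F x ∂m ≠ 0 ∧ ∫⁻ x, F x ∂m ≠ ∞ := by
  constructor
  · have : c * m Set.univ ≤ ∫⁻ x, F x ∂m := by
      rw [← lintegral_const]; exact lintegral_mono h1
    have h : c * m Set.univ ≠ 0 := mul_ne_zero hc (by simpa using hm)
    intro h'
    rw [h'] at this
    exact h (le_antisymm this bot_le)
  · have : ∫⁻ x, F x ∂m ≤ C * m Set.univ := by
      rw [← lintegral_const]; exact lintegral_mono h2
    exact (this.trans_lt (ENNReal.mul_lt_top hC.lt_top (measure_lt_top _ _))).ne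

lemma fk_wd_prob {E : Type*} [MeasurableSpace E] (m : Measure E) [IsFiniteMeasure m] (hm : m ≠ 0)
    (F : E → ℝ≥0∞) (c C : ℝ≥0∞) (hc : c ≠ 0) (hC : C ≠ ∞)
    (h1 : ∀ x, c ≤ F x) (h2 : ∀ x, F x ≤ C) :
    IsProbabilityMeasure (normalizeMeasure (m.withDensity F)) := by
  have := fk_wd m hm F c C hc hC h1 h2
  apply fk_norm_prob <;> simp [this.1, this.2]

/-- integral representation of the one-step update -/
lemma fk_rep {X Y : Type*} [MeasurableSpace X] [MeasurableSpace Y] (S : Kernel X Y)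
    (μ : Measure X) (F : Y → ℝ≥0∞) (hF : Measurable F)
    (hG0 : ∀ x, ∫⁻ y, F y ∂(S x) ≠ 0) (hG1 : ∀ x, ∫⁻ y, F y ∂(S x) ≠ ∞)
    (A : Set Y) (hA : MeasurableSet A) :
    (normalizeMeasure ((μ.bind S).withDensity F) A).toReal =
      ∫ x, ((∫⁻ y in A, F y ∂(S x)) / (∫⁻ y, F y ∂(S x))).toReal
        ∂(normalizeMeasure (μ.withDensity fun x => ∫⁻ y, F y ∂(S x))) := by
  have mG : Measurable fun x => ∫⁻ y, F y ∂(S x) := hF.lintegral_kernel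
  have mT : Measurable fun x => ∫⁻ y in A, F y ∂(S x) := by
    simp_rw [← lintegral_indicator hA]
    exact (hF.indicator hA).lintegral_kernel
  have mD : Measurable fun x => (∫⁻ y in A, F y ∂(S x)) / (∫⁻ y, F y ∂(S x)) := mT.div mG
  rw [integral_toReal mD.aemeasurable]
  · congr 1
    unfold normalizeMeasure
    rw [lintegral_smul_measure, lintegral_withDensity_eq_lintegral_mul _ mG mD]
    simp only [Measure.smul_apply, smul_eq_mul]
    rw [withDensity_apply _ hA, withDensity_apply _ MeasurableSet.univ,
      withDensity_apply _ MeasurableSet.univ, Measure.restrict_univ, Measure.restrict_univ,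
      Measure.lintegral_bind S.measurable.aemeasurable hF.aemeasurable,
      ← lintegral_indicator hA,
      Measure.lintegral_bind S.measurable.aemeasurable (hF.indicator hA).aemeasurable]
    congr 1
    apply lintegral_congr
    intro x
    simp only [Pi.mul_apply]
    rw [ENNReal.mul_div_cancel (hG0 x) (hG1 x), lintegral_indicator hA]
  · refine ae_of_all _ fun x => ?_
    refine ENNReal.div_lt_top ?_ (hG0 x)
    exact ((setLIntegral_le_lintegral A F).trans_lt (hG1 x).lt_top).ne

lemma fk_bounds {X Y : Type*} [MeasurableSpace X] [MeasurableSpace Y] (S : Kernel X Y)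
    (l : Measure Y) (e' e'' : ℝ)
    (hmix : ∀ x, ∀ A : Set Y, MeasurableSet A →
      ENNReal.ofReal e' * l A ≤ S x A ∧ S x A ≤ ENNReal.ofReal (1 / e'') * l A)
    (F : Y → ℝ≥0∞) (A : Set Y) (x : X) :
    ENNReal.ofReal e' * ∫⁻ y in A, F y ∂l ≤ ∫⁻ y in A, F y ∂(S x) ∧
      ∫⁻ y in A, F y ∂(S x) ≤ ENNReal.ofReal (1 / e'') * ∫⁻ y in A, F y ∂l := by
  have h1 : ENNReal.ofReal e' • l ≤ S x := by
    rw [Measure.le_iff]; intro t ht; simpa using (hmix x t ht).1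
  have h2 : S x ≤ ENNReal.ofReal (1 / e'') • l := by
    rw [Measure.le_iff]; intro t ht; simpa using (hmix x t ht).2
  constructor
  · rw [← smul_eq_mul, ← lintegral_smul_measure, ← Measure.restrict_smul]
    exact lintegral_mono' (Measure.restrict_mono le_rfl h1) le_rfl
  · rw [← smul_eq_mul, ← lintegral_smul_measure, ← Measure.restrict_smul]
    exact lintegral_mono' (Measure.restrict_mono le_rfl h2) le_rfl

lemma fk_step {X Y : Type*} [MeasurableSpace X] [MeasurableSpace Y] (S : Kernel X Y)
    (l : Measure Y) [IsFiniteMeasure l] (hl : l ≠ 0) (e e' e'' : ℝ) (he' : 0 < e') (he'' : 0 < e'')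
    (hsq : e' * e'' = e ^ 2)
    (hmix : ∀ x, ∀ A : Set Y, MeasurableSet A →
      ENNReal.ofReal e' * l A ≤ S x A ∧ S x A ≤ ENNReal.ofReal (1 / e'') * l A)
    (μ μ' : Measure X) [IsFiniteMeasure μ] [IsFiniteMeasure μ'] (hμ : μ ≠ 0) (hμ' : μ' ≠ 0)
    (F : Y → ℝ≥0∞) (hF : Measurable F) (c C : ℝ≥0∞) (hc : c ≠ 0) (hC : C ≠ ∞)
    (h1 : ∀ x, c ≤ F x) (h2 : ∀ x, F x ≤ C) :
    tvDist (normalizeMeasure ((μ.bind S).withDensity F))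
      (normalizeMeasure ((μ'.bind S).withDensity F)) ≤
    (1 - e ^ 2) * tvDist (normalizeMeasure (μ.withDensity fun x => ∫⁻ y, F y ∂(S x)))
      (normalizeMeasure (μ'.withDensity fun x => ∫⁻ y, F y ∂(S x))) := by
  obtain ⟨hL0, hL1⟩ := fk_wd l hl F c C hc hC h1 h2
  have hb := fun x => fk_bounds S l e' e'' hmix F Set.univ x
  simp only [Measure.restrict_univ] at hb
  have hc' : ENNReal.ofReal e' * ∫⁻ y, F y ∂l ≠ 0 := mul_ne_zero (by simpa using he') hL0
  have hC' : ENNReal.ofReal (1 / e'') * ∫⁻ y, F y ∂l ≠ ∞ :=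
    ENNReal.mul_ne_top ENNReal.ofReal_ne_top hL1
  have hG0 : ∀ x, ∫⁻ y, F y ∂(S x) ≠ 0 := fun x h => hc' (le_antisymm (h ▸ (hb x).1) bot_le)
  have hG1 : ∀ x, ∫⁻ y, F y ∂(S x) ≠ ∞ := fun x => ((hb x).2.trans_lt hC'.lt_top).ne
  have p1 := fk_wd_prob μ hμ _ _ _ hc' hC' (fun x => (hb x).1) (fun x => (hb x).2)
  have p2 := fk_wd_prob μ' hμ' _ _ _ hc' hC' (fun x => (hb x).1) (fun x => (hb x).2)
  -- pointwise bounds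
  have low : ∀ A : Set Y, MeasurableSet A → ∀ x,
      e ^ 2 * ((∫⁻ y in A, F y ∂l).toReal / (∫⁻ y, F y ∂l).toReal) ≤
        ((∫⁻ y in A, F y ∂(S x)) / (∫⁻ y, F y ∂(S x))).toReal := by
    intro A hA x
    rw [ENNReal.toReal_div]
    have a1 := ENNReal.toReal_mono ((setLIntegral_le_lintegral A F).trans_lt (hG1 x).lt_top).ne
      (fk_bounds S l e' e'' hmix F A x).1
    have a2 := ENNReal.toReal_mono hC' (hb x).2
    rw [ENNReal.toReal_mul, ENNReal.toReal_ofReal he'.le] at a1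
    rw [ENNReal.toReal_mul, ENNReal.toReal_ofReal (by positivity)] at a2
    have g0 := ENNReal.toReal_pos (hG0 x) (hG1 x)
    have l0 := ENNReal.toReal_pos hL0 hL1
    have la : 0 ≤ (∫⁻ y in A, F y ∂l).toReal := ENNReal.toReal_nonneg
    generalize (∫⁻ y in A, F y ∂l).toReal = a at *
    generalize (∫⁻ y, F y ∂l).toReal = L at *
    generalize (∫⁻ y in A, F y ∂(S x)).toReal = t at *
    generalize (∫⁻ y, F y ∂(S x)).toReal = g at *
    have a3 : e'' * g ≤ L := by
      have := mul_le_mul_of_nonneg_left a2 he''.le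
      rwa [← mul_assoc, mul_one_div_cancel he''.ne', one_mul] at this
    rw [← hsq, mul_div_assoc', div_le_div_iff₀ l0 g0]
    calc e' * e'' * a * g = (e' * a) * (e'' * g) := by ring
      _ ≤ t * L := mul_le_mul a1 a3 (by positivity) ((by positivity : 0 ≤ e' * a).trans a1)
  have key : ∀ (m m' : Measure X) [IsFiniteMeasure m] [IsFiniteMeasure m']
      (_ : IsProbabilityMeasure (normalizeMeasure (m.withDensity fun x => ∫⁻ y, F y ∂(S x))))
      (_ : IsProbabilityMeasure (normalizeMeasure (m'.withDensity fun x => ∫⁻ y, F y ∂(S x))))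
      (A : Set Y), MeasurableSet A →
      (normalizeMeasure ((m.bind S).withDensity F) A).toReal -
        (normalizeMeasure ((m'.bind S).withDensity F) A).toReal ≤
      (1 - e ^ 2) * tvDist (normalizeMeasure (m.withDensity fun x => ∫⁻ y, F y ∂(S x)))
        (normalizeMeasure (m'.withDensity fun x => ∫⁻ y, F y ∂(S x))) := by
    intro m m' _ _ q1 q2 A hA
    rw [fk_rep S m F hF hG0 hG1 A hA, fk_rep S m' F hF hG0 hG1 A hA]
    set d := e ^ 2 * ((∫⁻ y in A, F y ∂l).toReal / (∫⁻ y, F y ∂l).toReal) with hd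
    set r : X → ℝ := fun x => ((∫⁻ y in A, F y ∂(S x)) / (∫⁻ y, F y ∂(S x))).toReal with hr
    have mr : Measurable r := by
      have mG : Measurable fun x => ∫⁻ y, F y ∂(S x) := hF.lintegral_kernel
      have mT : Measurable fun x => ∫⁻ y in A, F y ∂(S x) := by
        simp_rw [← lintegral_indicator hA]
        exact (hF.indicator hA).lintegral_kernel
      exact (mT.div mG).ennreal_toReal
    have lo : ∀ x, 0 ≤ r x - d := fun x => sub_nonneg.2 (low A hA x)
    have hi : ∀ x, r x - d ≤ 1 - e ^ 2 := by
      intro x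
      have b := low Aᶜ hA.compl x
      have s1 := lintegral_add_compl (μ := S x) F hA
      have s2 := lintegral_add_compl (μ := l) F hA
      have f1 : ∫⁻ y in A, F y ∂(S x) ≠ ∞ :=
        ((setLIntegral_le_lintegral A F).trans_lt (hG1 x).lt_top).ne
      have f2 : ∫⁻ y in Aᶜ, F y ∂(S x) ≠ ∞ :=
        ((setLIntegral_le_lintegral Aᶜ F).trans_lt (hG1 x).lt_top).ne
      have f3 : ∫⁻ y in A, F y ∂l ≠ ∞ :=
        ((setLIntegral_le_lintegral A F).trans_lt hL1.lt_top).ne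
      have f4 : ∫⁻ y in Aᶜ, F y ∂l ≠ ∞ :=
        ((setLIntegral_le_lintegral Aᶜ F).trans_lt hL1.lt_top).ne
      have g0 := ENNReal.toReal_pos (hG0 x) (hG1 x)
      have l0 := ENNReal.toReal_pos hL0 hL1
      have s1' := congrArg ENNReal.toReal s1
      have s2' := congrArg ENNReal.toReal s2
      rw [ENNReal.toReal_add f1 f2] at s1'
      rw [ENNReal.toReal_add f3 f4] at s2'
      rw [ENNReal.toReal_div] at b
      simp only [hr, hd, ENNReal.toReal_div]
      have k1 := div_self g0.ne'
      have k2 := div_self l0.ne'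
      nth_rewrite 1 [← s1'] at k1
      nth_rewrite 1 [← s2'] at k2
      rw [add_div] at k1 k2
      have k3 := congrArg (fun z => e ^ 2 * z) k2
      simp only [mul_add, mul_one] at k3
      linarith
    have hint : ∀ (p : Measure X) [IsFiniteMeasure p], Integrable r p := by
      intro p _
      have : Integrable (fun x => r x - d) p :=
        Integrable.of_bound (mr.sub_const d).aestronglyMeasurable (1 - e ^ 2)
          (ae_of_all _ fun x => by rw [Real.norm_eq_abs, abs_of_nonneg (lo x)]; exact hi x)
      refine (this.add (integrable_const d)).congr (ae_of_all _ fun x => ?_)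
      simp
    have fin := fk_int_le (f := fun x => r x - d) (hf := mr.sub_const d) (M := 1 - e ^ 2) (h0 := lo) (hM := hi)
      (μ := normalizeMeasure (m.withDensity fun x => ∫⁻ y, F y ∂(S x)))
      (ν := normalizeMeasure (m'.withDensity fun x => ∫⁻ y, F y ∂(S x)))
    rw [integral_sub (hint _) (integrable_const d), integral_sub (hint _) (integrable_const d)] at fin
    simpa using fin
  haveI : Nonempty { s : Set Y // MeasurableSet s } := ⟨⟨∅, MeasurableSet.empty⟩⟩
  conv_lhs => unfold tvDist
  refine ciSup_le fun A => ?_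
  rw [abs_le']
  refine ⟨key μ μ' p1 p2 A A.2, ?_⟩
  rw [neg_sub, fk_tv_comm]
  exact key μ' μ p2 p1 A A.2

lemma fk_chain {E : ℕ → Type*} [∀ k, MeasurableSpace (E k)] (n : ℕ)
    (S : ∀ k, Kernel (E k) (E (k + 1)))
    (ε ε' ε'' : ℕ → ℝ) (lam : ∀ k, Measure (E (k + 1)))
    (hlamfin : ∀ k, IsFiniteMeasure (lam k)) (hlamne : ∀ k < n, lam k ≠ 0)
    (hε : ∀ k < n, ε k ∈ Set.Ioo (0 : ℝ) 1)
    (hε' : ∀ k < n, 0 < ε' k) (hε'' : ∀ k < n, 0 < ε'' k)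
    (hεsq : ∀ k < n, ε' k * ε'' k = ε k ^ 2)
    (hmix : ∀ k < n, ∀ x, ∀ A : Set (E (k + 1)), MeasurableSet A →
      ENNReal.ofReal (ε' k) * lam k A ≤ S k x A ∧
        S k x A ≤ ENNReal.ofReal (1 / ε'' k) * lam k A)
    (η₀ η₀' : Measure (E 0)) (hη₀ : IsProbabilityMeasure η₀)
    (hη₀' : IsProbabilityMeasure η₀') (m : ℕ) (hm : m ≤ n) :
    (∀ (F : E m → ℝ≥0∞) (c C : ℝ≥0∞), Measurable F → c ≠ 0 → C ≠ ∞ →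
      (∀ x, c ≤ F x) → (∀ x, F x ≤ C) →
      (∃ c' C' : ℝ≥0∞, c' ≠ 0 ∧ C' ≠ ∞ ∧
        ∀ x, c' ≤ ∫⁻ y, F y ∂(compChain S m x) ∧ ∫⁻ y, F y ∂(compChain S m x) ≤ C') ∧
      tvDist (normalizeMeasure ((η₀.bind (compChain S m)).withDensity F))
        (normalizeMeasure ((η₀'.bind (compChain S m)).withDensity F)) ≤
      (∏ k ∈ Finset.range m, (1 - ε k ^ 2)) *
        tvDist (normalizeMeasure (η₀.withDensity fun x => ∫⁻ y, F y ∂(compChain S m x)))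
          (normalizeMeasure (η₀'.withDensity fun x => ∫⁻ y, F y ∂(compChain S m x)))) := by
  induction m with
  | zero =>
    intro F c C hF hc hC h1 h2
    have e : ∀ x, ∫⁻ y, F y ∂(compChain S 0 x) = F x := by
      intro x
      simp only [compChain, Kernel.id_apply]
      exact lintegral_dirac' _ hF
    simp only [e]
    refine ⟨⟨c, C, hc, hC, fun x => ⟨h1 x, h2 x⟩⟩, ?_⟩
    have b : ∀ η : Measure (E 0), η.bind (compChain S 0) = η := by
      intro η
      simp only [compChain]
      exact Measure.id_comp
    rw [b, b]; simp
  | succ m ih =>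
    intro F c C hF hc hC h1 h2
    have hmn : m < n := hm
    haveI := hlamfin m
    obtain ⟨hL0, hL1⟩ := fk_wd (lam m) (hlamne m hmn) F c C hc hC h1 h2
    have hb := fun x => fk_bounds (S m) (lam m) _ _ (hmix m hmn) F Set.univ x
    simp only [Measure.restrict_univ] at hb
    have hc' : ENNReal.ofReal (ε' m) * ∫⁻ y, F y ∂(lam m) ≠ 0 :=
      mul_ne_zero (by simpa using hε' m hmn) hL0
    have hC' : ENNReal.ofReal (1 / ε'' m) * ∫⁻ y, F y ∂(lam m) ≠ ∞ :=
      ENNReal.mul_ne_top ENNReal.ofReal_ne_top hL1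
    have mG : Measurable fun x => ∫⁻ y, F y ∂(S m x) := hF.lintegral_kernel
    obtain ⟨hex, hle⟩ := ih (by omega) _ _ _ mG hc' hC' (fun x => (hb x).1) (fun x => (hb x).2)
    have e : ∀ x, ∫⁻ y, F y ∂(compChain S (m + 1) x) =
        ∫⁻ z, ∫⁻ y, F y ∂(S m z) ∂(compChain S m x) := by
      intro x
      simp only [compChain]
      exact Kernel.lintegral_comp _ _ _ hF
    simp only [e]
    refine ⟨hex, ?_⟩
    have b : ∀ η : Measure (E 0), η.bind (compChain S (m + 1)) =
        (η.bind (compChain S m)).bind (S m) := by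
      intro η
      simp only [compChain]
      exact Measure.comp_assoc.symm
    have mass : ∀ η : Measure (E 0), IsProbabilityMeasure η →
        IsFiniteMeasure (η.bind (compChain S m)) ∧ η.bind (compChain S m) ≠ 0 := by
      intro η hη
      obtain ⟨⟨c1, C1, hc1, hC1, hB⟩, -⟩ := ih (by omega) (fun _ => 1) 1 1 measurable_const
        one_ne_zero ENNReal.one_ne_top (fun _ => le_rfl) (fun _ => le_rfl)
      have := fk_wd η (IsProbabilityMeasure.ne_zero η) _ c1 C1 hc1 hC1
        (fun x => (hB x).1) (fun x => (hB x).2)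
      simp only [lintegral_one] at this
      rw [← Measure.bind_apply MeasurableSet.univ (Kernel.measurable _).aemeasurable] at this
      exact ⟨⟨this.2.lt_top⟩, fun h => this.1 (by rw [h]; simp)⟩
    obtain ⟨fi, ne⟩ := mass η₀ hη₀
    obtain ⟨fi', ne'⟩ := mass η₀' hη₀'
    rw [b, b, Finset.prod_range_succ, mul_comm (∏ k ∈ Finset.range m, _), mul_assoc]
    refine (fk_step (S m) (lam m) (hlamne m hmn) (ε m) (ε' m) (ε'' m) (hε' m hmn) (hε'' m hmn)
      (hεsq m hmn) (hmix m hmn) _ _ ne ne' F hF c C hc hC h1 h2).trans ?_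
    refine mul_le_mul_of_nonneg_left hle ?_
    have := hε m hmn
    nlinarith [this.1, this.2]

lemma fk_bullet {X : Type*} [MeasurableSpace X] (η : Measure X) [IsFiniteMeasure η]
    (h : X → ℝ≥0∞) (mh : Measurable h) (C : ℝ≥0∞) (hC : C ≠ ∞) (hh : ∀ x, h x ≤ C) :
    bullet (fun x => (h x).toReal) η = normalizeMeasure (η.withDensity h) := by
  have ht : ∀ x, h x ≠ ∞ := fun x => ((hh x).trans_lt hC.lt_top).ne
  unfold bullet normalizeMeasure
  simp only [ENNReal.ofReal_toReal (ht _)]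
  congr 2
  rw [integral_toReal mh.aemeasurable (ae_of_all _ fun x => (ht x).lt_top),
    withDensity_apply _ MeasurableSet.univ, Measure.restrict_univ, ENNReal.ofReal_toReal]
  have : ∫⁻ x, h x ∂η ≤ C * η Set.univ := by
    rw [← lintegral_const]; exact lintegral_mono hh
  exact (this.trans_lt (ENNReal.mul_lt_top hC.lt_top (measure_lt_top _ _))).ne

/-- Stability of normalized Feynman–Kac flows built from mixing kernels
(kernels and potentials are indexed from `0` here, so `Q k`, `Ψ k`, `S k`,
`ε k`, `lam k` play the roles of `𝔔_{k+1}`, `Ψ_{k+1}`, `𝔖_{k+1}`, `ε_{k+1}`,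
`λ_{k+1}` in the paper). -/
theorem feynman_kac_stability
    {E : ℕ → Type*} [∀ k, MeasurableSpace (E k)] (n : ℕ) (hn : 1 ≤ n)
    (Q : ∀ k, Kernel (E k) (E (k + 1))) (hQ : ∀ k, IsMarkovKernel (Q k))
    (Ψ : ∀ k, E (k + 1) → ℝ)
    (hΨmeas : ∀ k, Measurable (Ψ k)) (hΨnonneg : ∀ k x, 0 ≤ Ψ k x)
    (hΨbdd : ∀ k, ∃ C : ℝ, ∀ x, Ψ k x ≤ C)
    (S : ∀ k, Kernel (E k) (E (k + 1)))
    (hS : ∀ k x, S k x = (Q k x).withDensity fun x' => ENNReal.ofReal (Ψ k x'))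
    (ε ε' ε'' : ℕ → ℝ) (lam : ∀ k, Measure (E (k + 1)))
    (hlamfin : ∀ k, IsFiniteMeasure (lam k)) (hlamne : ∀ k < n, lam k ≠ 0)
    (hε : ∀ k < n, ε k ∈ Set.Ioo (0 : ℝ) 1)
    (hε' : ∀ k < n, 0 < ε' k) (hε'' : ∀ k < n, 0 < ε'' k)
    (hεsq : ∀ k < n, ε' k * ε'' k = ε k ^ 2)
    (hmix : ∀ k < n, ∀ x, ∀ A : Set (E (k + 1)), MeasurableSet A →
      ENNReal.ofReal (ε' k) * lam k A ≤ S k x A ∧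
        S k x A ≤ ENNReal.ofReal (1 / ε'' k) * lam k A)
    (η₀ η₀' : Measure (E 0)) (hη₀ : IsProbabilityMeasure η₀)
    (hη₀' : IsProbabilityMeasure η₀') :
    tvDist (normalizeMeasure (η₀.bind (compChain S n)))
        (normalizeMeasure (η₀'.bind (compChain S n))) ≤
      (∏ k ∈ Finset.range n, (1 - ε k ^ 2)) *
        tvDist (bullet (fun x => (compChain S n x Set.univ).toReal) η₀)
          (bullet (fun x => (compChain S n x Set.univ).toReal) η₀') := by
  obtain ⟨⟨c, C, -, hC, hB⟩, hle⟩ := fk_chain n S ε ε' ε'' lam hlamfin hlamne hε hε' hε'' hεsq hmix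
    η₀ η₀' hη₀ hη₀' n le_rfl (fun _ => 1) 1 1 measurable_const
    one_ne_zero ENNReal.one_ne_top (fun _ => le_rfl) (fun _ => le_rfl)
  simp only [lintegral_one] at hB hle
  have w : ∀ m : Measure (E n), m.withDensity (fun _ => (1 : ℝ≥0∞)) = m := fun m =>
    withDensity_one
  rw [w, w] at hle
  have mh : Measurable fun x => compChain S n x Set.univ :=
    Kernel.measurable_coe _ MeasurableSet.univ
  rwa [fk_bullet η₀ _ mh C hC (fun x => (hB x).2), fk_bullet η₀' _ mh C hC (fun x => (hB x).2)]
end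

section
/- Let μ and μ′ be probability measures on a measurable space E and let Ψ : E → [0,∞) be a bounded measurable function with ∫Ψ dμ > 0 and ∫Ψ dμ′ > 0. Then ‖Ψ•μ − Ψ•μ′‖ ≤ 2·min(1, (‖Ψ‖_∞ / ∫Ψ dμ) · ‖μ − μ′‖), where ‖Ψ‖_∞ = sup_{x∈E} Ψ(x). -/
open MeasureTheory

lemma tv_le_aux {E : Type*} [MeasurableSpace E] (μ μ' : Measure E)
    [IsProbabilityMeasure μ] [IsProbabilityMeasure μ'] (s : Set E) (hs : MeasurableSet s) :
    |μ.real s - μ'.real s| ≤ tvDist μ μ' := by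
  unfold tvDist
  refine le_ciSup (f := fun s : { s : Set E // MeasurableSet s } =>
    |(μ s).toReal - (μ' s).toReal|) ⟨1, ?_⟩ ⟨s, hs⟩
  rintro _ ⟨t, rfl⟩
  have h1 : μ.real t ≤ 1 := measureReal_le_one
  have h2 : μ'.real t ≤ 1 := measureReal_le_one
  have h3 : 0 ≤ μ.real t := measureReal_nonneg
  have h4 : 0 ≤ μ'.real t := measureReal_nonneg
  change |μ.real t - μ'.real t| ≤ 1
  rw [abs_le]; constructor <;> linarith

lemma integrable_aux {E : Type*} [MeasurableSpace E] (μ : Measure E)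
    [IsProbabilityMeasure μ] (f : E → ℝ) (hf : Measurable f) (h0 : ∀ x, 0 ≤ f x) (M : ℝ)
    (hM : ∀ x, f x ≤ M) : Integrable f μ :=
  Integrable.of_bound hf.aestronglyMeasurable M
    (Filter.Eventually.of_forall fun x => by
      rw [Real.norm_eq_abs, abs_of_nonneg (h0 x)]; exact hM x)

lemma integral_diff_aux {E : Type*} [MeasurableSpace E] (μ μ' : Measure E)
    [IsProbabilityMeasure μ] [IsProbabilityMeasure μ'] (f : E → ℝ) (hf : Measurable f)
    (h0 : ∀ x, 0 ≤ f x) (M : ℝ) (hM0 : 0 ≤ M) (hM : ∀ x, f x ≤ M) :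
    |∫ x, f x ∂μ - ∫ x, f x ∂μ'| ≤ M * tvDist μ μ' := by
  have key : ∀ (ν : Measure E) [IsProbabilityMeasure ν],
      ∫ x, f x ∂ν = ∫ t in Set.Ioc 0 M, ν.real {a | t ≤ f a} := fun ν _ =>
    Integrable.integral_eq_integral_Ioc_meas_le (integrable_aux ν f hf h0 M hM)
      (Filter.Eventually.of_forall h0) (Filter.Eventually.of_forall hM)
  have ki : ∀ (ν : Measure E) [IsProbabilityMeasure ν],
      IntegrableOn (fun t => ν.real {a | t ≤ f a}) (Set.Ioc 0 M) := fun ν _ => by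
    refine IntegrableOn.mono_set (t := Set.Icc 0 M) ?_ Set.Ioc_subset_Icc_self
    refine AntitoneOn.integrableOn_isCompact isCompact_Icc ?_
    intro a _ b _ hab
    exact measureReal_mono (fun x (hx : b ≤ f x) => le_trans hab hx)
  rw [key μ, key μ', ← integral_sub (ki μ) (ki μ')]
  have := norm_setIntegral_le_of_norm_le_const (μ := volume) (s := Set.Ioc 0 M)
    (f := fun t => μ.real {a | t ≤ f a} - μ'.real {a | t ≤ f a}) (C := tvDist μ μ')
    (by simp) (fun t _ => tv_le_aux μ μ' _ (measurableSet_le measurable_const hf))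
  rw [Real.norm_eq_abs] at this
  refine this.trans (le_of_eq ?_)
  simp [hM0, mul_comm]

lemma bullet_real_aux {E : Type*} [MeasurableSpace E] (μ : Measure E)
    [IsProbabilityMeasure μ] (f : E → ℝ) (hf : Integrable f μ)
    (h0 : ∀ x, 0 ≤ f x) (h1 : 0 < ∫ x, f x ∂μ) (s : Set E) (hs : MeasurableSet s) :
    (bullet f μ s).toReal = (∫ x, s.indicator f x ∂μ) / ∫ x, f x ∂μ := by
  unfold bullet
  rw [Measure.smul_apply, withDensity_apply _ hs,
    ← ofReal_integral_eq_lintegral_ofReal hf.integrableOn (Filter.Eventually.of_forall h0),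
    integral_indicator hs, smul_eq_mul, ENNReal.toReal_mul, ENNReal.toReal_inv,
    ENNReal.toReal_ofReal h1.le, ENNReal.toReal_ofReal (integral_nonneg h0)]
  ring

theorem bullet_tv_bound
    {E : Type*} [MeasurableSpace E] (μ μ' : Measure E)
    (hμ : IsProbabilityMeasure μ) (hμ' : IsProbabilityMeasure μ')
    (Ψ : E → ℝ) (hmeas : Measurable Ψ) (hnn : ∀ x, 0 ≤ Ψ x)
    (hbdd : ∃ C : ℝ, ∀ x, Ψ x ≤ C)
    (h1 : 0 < ∫ x, Ψ x ∂μ) (h2 : 0 < ∫ x, Ψ x ∂μ') :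
    tvDist (bullet Ψ μ) (bullet Ψ μ') ≤
      2 * min 1 ((⨆ x, Ψ x) / (∫ x, Ψ x ∂μ) * tvDist μ μ') := by
  obtain ⟨C, hC⟩ := hbdd
  have hM : ∀ x, Ψ x ≤ ⨆ x, Ψ x := fun x =>
    le_ciSup (f := Ψ) ⟨C, by rintro _ ⟨y, rfl⟩; exact hC y⟩ x
  have hM0 : 0 ≤ ⨆ x, Ψ x := Real.iSup_nonneg hnn
  have i1 := integrable_aux μ Ψ hmeas hnn _ hM
  have i2 := integrable_aux μ' Ψ hmeas hnn _ hM
  have hZ := integral_diff_aux μ μ' Ψ hmeas hnn _ hM0 hM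
  haveI : Nonempty { s : Set E // MeasurableSet s } := ⟨⟨∅, MeasurableSet.empty⟩⟩
  conv_lhs => unfold tvDist
  refine ciSup_le ?_
  rintro ⟨s, hs⟩
  simp only
  rw [bullet_real_aux μ Ψ i1 hnn h1 s hs, bullet_real_aux μ' Ψ i2 hnn h2 s hs]
  have n0 : ∀ x, 0 ≤ s.indicator Ψ x := fun x => Set.indicator_nonneg (fun y _ => hnn y) x
  have nle : ∀ x, s.indicator Ψ x ≤ Ψ x := fun x => Set.indicator_le_self' (fun y _ => hnn y) x
  have hA := integral_diff_aux μ μ' (s.indicator Ψ) (hmeas.indicator hs) n0 _ hM0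
    (fun x => (nle x).trans (hM x))
  have a0 : 0 ≤ ∫ x, s.indicator Ψ x ∂μ := integral_nonneg n0
  have a0' : 0 ≤ ∫ x, s.indicator Ψ x ∂μ' := integral_nonneg n0
  have ale : ∫ x, s.indicator Ψ x ∂μ ≤ ∫ x, Ψ x ∂μ :=
    integral_mono (i1.indicator hs) i1 nle
  have ale' : ∫ x, s.indicator Ψ x ∂μ' ≤ ∫ x, Ψ x ∂μ' :=
    integral_mono (i2.indicator hs) i2 nle
  generalize (∫ x, s.indicator Ψ x ∂μ) = a at *
  generalize (∫ x, s.indicator Ψ x ∂μ') = a' at *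
  generalize (∫ x, Ψ x ∂μ) = Z at *
  generalize (∫ x, Ψ x ∂μ') = Z' at *
  generalize tvDist μ μ' = d at *
  generalize (⨆ x, Ψ x) = M at *
  have p0 : 0 ≤ a / Z := by positivity
  have q0 : 0 ≤ a' / Z' := by positivity
  have p1 : a / Z ≤ 1 := (div_le_one h1).2 ale
  have q1 : a' / Z' ≤ 1 := (div_le_one h2).2 ale'
  rw [mul_min_of_nonneg _ _ (by norm_num)]
  refine le_min (by rw [abs_le]; constructor <;> linarith) ?_
  have e : a / Z - a' / Z' = ((a - a') - (a' / Z') * (Z - Z')) / Z := by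
    field_simp; ring
  rw [e, abs_div, abs_of_pos h1, div_le_iff₀ h1]
  have e2 : 2 * (M / Z * d) * Z = M * d + M * d := by field_simp; ring
  rw [e2]
  refine (abs_sub _ _).trans (add_le_add hA ?_)
  rw [abs_mul, abs_of_nonneg q0]
  exact (mul_le_of_le_one_left (abs_nonneg _) q1).trans hZ
end
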